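/- Let 𝓓 = (Ω, 𝓑) be a β(i) design with parameter (v, k, d), set c = k−d, and assume i ≥ 2 and that v does not achieve the upper bound (d+2(i−1))·(k−d)/(i−1), i.e. (i−1)·v < (d+2(i−1))·(k−d). Then g(v−k, d, c, i) ≥ 0. Moreover, g(v−k, d, c, i) = 0 holds if and only if the number |{B ∈ 𝓑 : |X ∩ B| = d+i−2}| is the same for every X ∈ S₁. -/

import Mathlib

/-!
Call the degree of `X ∈ S₁` the number of blocks meeting `X` in `d + i - 2` points. By
Cauchy–Schwarz `|S₁| * ∑ deg² - (∑ deg)²` is nonnegative and vanishes exactly when the degree is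
constant on `S₁`; and `g` turns out to be a positive multiple of this difference.

If `X` has size `d + 2i - 2` (or `d + 2i - 3`) and meets no block in more than `d + i - 1` (or
`d + i - 2`) points, then the blocks attaining this bound form a Steiner system of strength 1 (or 2)
outside `X`, so their number does not depend on `X`. In size `d + 2i - 2`, comparing the first two
moments of this number yields the number of pairs of blocks with `d` common points, hence also
`∑ deg²` over `S₁`. To count `S₁`, extend its members by one point: the number of admissible points
is affine in the degree, and the extended sets have size `d + 2i - 3`.
-/

open Finset

variable {α : Type*} [Fintype α] [DecidableEq α]

/-- `𝓑` is a design on the finite type `α` of cardinality `v`, with block size `k` and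
maximal pairwise block intersection size `d`. -/
def IsDesign (𝓑 : Finset (Finset α)) (v k d : ℕ) : Prop :=
  Fintype.card α = v ∧ 2 ≤ 𝓑.card ∧ d < k ∧ k < v ∧
  (∀ B ∈ 𝓑, B.card = k) ∧
  (∀ B ∈ 𝓑, ∀ C ∈ 𝓑, B ≠ C → (B ∩ C).card ≤ d) ∧
  (∃ B ∈ 𝓑, ∃ C ∈ 𝓑, B ≠ C ∧ (B ∩ C).card = d)

/-- `𝓑` is a `β(i)` design with parameters `(v, k, d)`: a design such that
`1 ≤ i ≤ (v - d + 1)/2` and every `(d + 2i - 1)`-element subset `X` of `Ω` admits a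
unique block `B` with `|X ∩ B| ≥ d + i`. -/
def IsBetaDesign (𝓑 : Finset (Finset α)) (v k d i : ℕ) : Prop :=
  IsDesign 𝓑 v k d ∧ 1 ≤ i ∧ 2 * i ≤ v - d + 1 ∧
  ∀ X : Finset α, X.card = d + 2 * i - 1 →
    ∃! B, B ∈ 𝓑 ∧ d + i ≤ (X ∩ B).card

/-- The family `S₁` of all `(d + 2(i-2))`-element subsets `X` of `Ω` such that
`|X ∩ B| ≤ d + i - 2` for every block `B ∈ 𝓑`. -/
def S1 (𝓑 : Finset (Finset α)) (d i : ℕ) : Finset (Finset α) :=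
  (Finset.univ : Finset (Finset α)).filter
    (fun X => X.card = d + 2 * (i - 2) ∧ ∀ B ∈ 𝓑, (X ∩ B).card ≤ d + i - 2)

/-- The polynomial `g(x, d, c, i)` of Proposition 6. -/
noncomputable def gPoly (x d c i : ℝ) : ℝ :=
  (i - 1) * (i - 2) * x ^ 2
    - (i - 1) * (2 * (c - i + 1) * d + 2 * c * (i - 1) - 3 * i + 4) * x
    + (c - i + 1) * (c - i + 2) * d ^ 2
    + (c - i + 1) * ((2 * i - 3) * c + 3 * i - 4) * d
    + (i - 1) * (i - 2) * c ^ 2 + (i - 1) * (3 * i - 4) * c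
    - 2 * (i - 1) ^ 2 * (2 * i - 3)

section SumOfSquares

variable {ι 𝕜 : Type*} [CommRing 𝕜] (s : Finset ι) (f : ι → 𝕜)

lemma sum_sum_sub_sq :
    ∑ a ∈ s, ∑ b ∈ s, (f a - f b) ^ 2 = 2 * (#s * ∑ a ∈ s, f a ^ 2 - (∑ a ∈ s, f a) ^ 2) := by
  simp only [sub_sq, sum_add_distrib, sum_sub_distrib, sum_const, nsmul_eq_mul, ← mul_sum,
    ← sum_mul]
  ring

lemma sq_sum_eq_card_mul_sum_sq_iff [LinearOrder 𝕜] [IsStrictOrderedRing 𝕜] :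
    (∑ a ∈ s, f a) ^ 2 = #s * ∑ a ∈ s, f a ^ 2 ↔
      (s : Set ι).Pairwise fun a b ↦ f a = f b := by
  rw [eq_comm, ← sub_eq_zero, ← mul_eq_zero_iff_left two_ne_zero, ← sum_sum_sub_sq,
    sum_eq_zero_iff_of_nonneg fun a _ ↦ sum_nonneg fun b _ ↦ sq_nonneg _]
  simp only [sum_eq_zero_iff_of_nonneg fun b _ ↦ sq_nonneg (f _ - f b), sq_eq_zero_iff,
    sub_eq_zero]
  exact (@Set.pairwise_iff_of_refl _ (fun a b ↦ f a = f b) _ ⟨fun _ ↦ rfl⟩).symm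

end SumOfSquares

section Intersections

variable {β : Type*} [DecidableEq β]

lemma card_inter_add_card_inter_add_card_inter_sdiff_le (X B C : Finset β) :
    #(X ∩ B) + #(X ∩ C) + #((B ∩ C) \ X) ≤ #X + #(B ∩ C) := by
  have hX : #(X ∩ B ∪ X ∩ C) ≤ #X := card_le_card (union_subset inter_subset_left inter_subset_left)
  have hBC : #(X ∩ B ∩ (X ∩ C)) + #((B ∩ C) \ X) = #(B ∩ C) := by
    rw [← inter_inter_distrib_left, inter_comm, card_inter_add_card_sdiff]
  have := card_union_add_card_inter (X ∩ B) (X ∩ C)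
  omega

lemma add_card_le_card_union_inter_iff {X E B : Finset β} {s : ℕ} (hXE : Disjoint X E)
    (hXB : #(X ∩ B) ≤ s) : s + #E ≤ #((X ∪ E) ∩ B) ↔ #(X ∩ B) = s ∧ E ⊆ B := by
  have hcard : #((X ∪ E) ∩ B) = #(X ∩ B) + #(E ∩ B) := by
    rw [union_inter_distrib_right,
      card_union_of_disjoint (hXE.mono inter_subset_left inter_subset_left)]
  have hEB : #(E ∩ B) ≤ #E := card_le_card inter_subset_left
  have hsub : E ⊆ B ↔ #E ≤ #(E ∩ B) := by
    rw [← inter_eq_left]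
    exact ⟨fun h ↦ by rw [h], eq_of_subset_of_card_le inter_subset_left⟩
  rw [hsub]
  omega

variable [Fintype β]

lemma card_filter_subset_subset_card_inter {D U W : Finset β} (hDU : Disjoint D U)
    (hDW : Disjoint D W) (hUW : Disjoint U W) (a e : ℕ) :
    #{Y : Finset β | D ⊆ Y ∧ Y ⊆ D ∪ U ∪ W ∧ #(Y ∩ U) = a ∧ #(Y ∩ W) = e} =
      (#U).choose a * (#W).choose e := by
  rw [← card_powersetCard, ← card_powersetCard, ← card_product]
  rw [Finset.disjoint_left] at hDU hDW hUW
  have hunion_inter {P Q : Finset β} (hP : P ⊆ U) (hQ : Q ⊆ W) :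
      (D ∪ P ∪ Q) ∩ U = P ∧ (D ∪ P ∪ Q) ∩ W = Q := by grind
  refine card_bij' (fun Y _ ↦ (Y ∩ U, Y ∩ W)) (fun P _ ↦ D ∪ P.1 ∪ P.2) ?_ ?_ ?_ ?_
  · intro Y hY
    simp only [mem_filter, mem_univ, true_and] at hY
    simp only [mem_product, mem_powersetCard]
    exact ⟨⟨inter_subset_right, hY.2.2.1⟩, inter_subset_right, hY.2.2.2⟩
  · rintro ⟨P, Q⟩ h
    simp only [mem_product, mem_powersetCard] at h
    obtain ⟨⟨hP, rfl⟩, hQ, rfl⟩ := h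
    simp only [mem_filter, mem_univ, true_and, hunion_inter hP hQ, and_self, and_true]
    grind
  · intro Y hY
    simp only [mem_filter, mem_univ, true_and] at hY
    grind
  · rintro ⟨P, Q⟩ h
    simp only [mem_product, mem_powersetCard] at h
    exact Prod.ext_iff.2 (hunion_inter h.1.1 h.2.1)

lemma card_filter_card_eq_card_inter_eq (B : Finset β) (s e : ℕ) :
    #{Y : Finset β | #Y = s + e ∧ #(Y ∩ B) = s} =
      (#B).choose s * (Fintype.card β - #B).choose e := by
  rw [← card_compl, ← card_filter_subset_subset_card_inter (disjoint_empty_left B)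
    (disjoint_empty_left Bᶜ) disjoint_compl_right]
  congr 1 with Y
  have hY : #(Y ∩ B) + #(Y ∩ Bᶜ) = #Y := by
    rw [← sdiff_eq_inter_compl, card_inter_add_card_sdiff]
  simp only [mem_filter, mem_univ, true_and, empty_subset, empty_union, union_compl,
    subset_univ]
  omega

lemma card_filter_card_inter_eq_card_inter_eq {B C : Finset β} {d c : ℕ} (hB : #B = d + c)
    (hC : #C = d + c) (hBC : #(B ∩ C) = d) (a : ℕ) :
    #{X : Finset β | #X = d + 2 * a ∧ #(X ∩ B) = d + a ∧ #(X ∩ C) = d + a} = c.choose a ^ 2 := by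
  have hBC' : #(B \ C) = c := by have := card_inter_add_card_sdiff B C; omega
  have hCB' : #(C \ B) = c := by
    have := card_inter_add_card_sdiff C B
    rw [inter_comm] at this
    omega
  have hcount := card_filter_subset_subset_card_inter (D := B ∩ C) (U := B \ C) (W := C \ B)
    (by grind [Finset.disjoint_left]) (by grind [Finset.disjoint_left])
    (by grind [Finset.disjoint_left]) a a
  rw [hBC', hCB', ← sq] at hcount
  rw [← hcount]
  congr 1 with X
  have hunion : B ∩ C ∪ B \ C ∪ C \ B = B ∪ C := by grind
  have hXB : #(X ∩ B) = #(X ∩ (B ∩ C)) + #(X ∩ (B \ C)) := by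
    rw [← card_inter_add_card_sdiff (X ∩ B) C, inter_assoc, inter_sdiff_assoc]
  have hXC : #(X ∩ C) = #(X ∩ (B ∩ C)) + #(X ∩ (C \ B)) := by
    rw [← card_inter_add_card_sdiff (X ∩ C) B, inter_assoc, inter_sdiff_assoc, inter_comm C B]
  have hX : #(X ∩ B) + #(X ∩ C) + #(X \ (B ∪ C)) = #X + #(X ∩ (B ∩ C)) := by
    rw [← card_union_add_card_inter, ← inter_inter_distrib_left, ← inter_union_distrib_left,
      ← card_inter_add_card_sdiff X (B ∪ C)]
    omega
  have hD : #(X ∩ (B ∩ C)) + #((B ∩ C) \ X) = d := by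
    rw [inter_comm, card_inter_add_card_sdiff, hBC]
  simp only [mem_filter, mem_univ, true_and, hunion]
  rw [← sdiff_eq_empty_iff_subset, ← sdiff_eq_empty_iff_subset, ← card_eq_zero, ← card_eq_zero]
  omega

end Intersections

section Blocks

variable {β : Type*} [DecidableEq β] {𝓑 : Finset (Finset β)} {X B : Finset β} {k d s : ℕ}

/-- The blocks of `𝓑` that meet `X` in exactly `s` points; for `X ∈ S₁` and `s = d + i - 2` their
number is the degree of `X`. -/
def blocksMeeting (𝓑 : Finset (Finset β)) (X : Finset β) (s : ℕ) : Finset (Finset β) :=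
  {B ∈ 𝓑 | #(X ∩ B) = s}

/-- The ordered pairs of distinct blocks of `𝓑` that have exactly `d` points in common: the
pairs of distinct blocks that contribute to `∑ deg²`. -/
def extremalPairs (𝓑 : Finset (Finset β)) (d : ℕ) : Finset (Finset β × Finset β) :=
  {P ∈ 𝓑.offDiag | #(P.1 ∩ P.2) = d}

lemma mem_blocksMeeting : B ∈ blocksMeeting 𝓑 X s ↔ B ∈ 𝓑 ∧ #(X ∩ B) = s := by
  simp [blocksMeeting]

lemma card_sdiff_of_mem_blocksMeeting (hk : (𝓑 : Set (Finset β)).Sized k)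
    (hB : B ∈ blocksMeeting 𝓑 X s) : #(B \ X) = k - s := by
  obtain ⟨hB, hXB⟩ := mem_blocksMeeting.1 hB
  rw [card_sdiff, hXB, hk hB]

lemma pairwiseDisjoint_blocksMeeting_sdiff
    (hd : (𝓑 : Set (Finset β)).Pairwise fun B C ↦ #(B ∩ C) ≤ d)
    (hX : #X + d ≤ 2 * s) :
    (blocksMeeting 𝓑 X s : Set (Finset β)).PairwiseDisjoint (· \ X) := by
  intro B hB C hC hBC
  obtain ⟨hB, hXB⟩ := mem_blocksMeeting.1 hB
  obtain ⟨hC, hXC⟩ := mem_blocksMeeting.1 hC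
  have hinter : #((B ∩ C) \ X) = 0 := by
    have := card_inter_add_card_inter_add_card_inter_sdiff_le X B C
    have := hd hB hC hBC
    omega
  exact disjoint_iff.2 (inf_sdiff.symm.trans (card_eq_zero.1 hinter))

lemma blocksMeeting_erase {z : β} (hX : ∀ B ∈ 𝓑, #(X ∩ B) ≤ s) (hz : z ∈ X) :
    blocksMeeting 𝓑 (X.erase z) s = {B ∈ blocksMeeting 𝓑 X s | z ∉ B} := by
  ext B
  simp only [mem_filter, mem_blocksMeeting, and_assoc, erase_inter]
  refine and_congr_right fun hB ↦ ?_
  by_cases hzB : z ∈ B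
  · have := card_erase_lt_of_mem (mem_inter.2 ⟨hz, hzB⟩)
    have := hX B hB
    simp only [hzB, not_true_eq_false, and_false, iff_false]
    omega
  · simp [hzB]

end Blocks

section SparseSets

variable {𝓑 : Finset (Finset α)} {X B : Finset α} {k d c s t a e : ℕ}

/-- The `t`-subsets of the point set that meet every block of `𝓑` in at most `s` points; the
family `S₁` is the case `t = d + 2 * (i - 2)`, `s = d + i - 2`. -/
def sparseSets (𝓑 : Finset (Finset α)) (t s : ℕ) : Finset (Finset α) :=
  {X | #X = t ∧ ∀ B ∈ 𝓑, #(X ∩ B) ≤ s}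

/-- The points outside `X` lying on no block that meets `X` in `s` points. If every block meets
`X` in at most `s` points, they are the points that can be added to `X` without violating this
bound. -/
def freePoints (𝓑 : Finset (Finset α)) (X : Finset α) (s : ℕ) : Finset α :=
  {y ∈ Xᶜ | ∀ B ∈ blocksMeeting 𝓑 X s, y ∉ B}

lemma mem_sparseSets : X ∈ sparseSets 𝓑 t s ↔ #X = t ∧ ∀ B ∈ 𝓑, #(X ∩ B) ≤ s := by
  simp [sparseSets]

lemma mem_sparseSets_of_card_inter_eq
    (hd : (𝓑 : Set (Finset α)).Pairwise fun B C ↦ #(B ∩ C) ≤ d) (hts : t + d ≤ 2 * s)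
    (hX : #X = t) (hB : B ∈ 𝓑) (hXB : #(X ∩ B) = s) : X ∈ sparseSets 𝓑 t s := by
  refine mem_sparseSets.2 ⟨hX, fun C hC ↦ ?_⟩
  obtain rfl | hBC := eq_or_ne B C
  · exact hXB.le
  · have := card_inter_add_card_inter_add_card_inter_sdiff_le X B C
    have := hd hB hC hBC
    omega

lemma card_freePoints_add (hk : (𝓑 : Set (Finset α)).Sized k)
    (hd : (𝓑 : Set (Finset α)).Pairwise fun B C ↦ #(B ∩ C) ≤ d) (hX : #X + d ≤ 2 * s) :
    #(freePoints 𝓑 X s) + #(blocksMeeting 𝓑 X s) * (k - s) = Fintype.card α - #X := by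
  have hcovered : {y ∈ Xᶜ | ¬∀ B ∈ blocksMeeting 𝓑 X s, y ∉ B} =
      (blocksMeeting 𝓑 X s).biUnion (· \ X) := by
    ext y
    simp only [mem_filter, mem_compl, mem_biUnion, mem_sdiff]
    grind
  have hsplit := card_filter_add_card_filter_not (s := Xᶜ)
    fun y ↦ ∀ B ∈ blocksMeeting 𝓑 X s, y ∉ B
  rwa [hcovered, card_biUnion (pairwiseDisjoint_blocksMeeting_sdiff hd hX),
    sum_const_nat fun B hB ↦ card_sdiff_of_mem_blocksMeeting hk hB, card_compl] at hsplit

lemma mem_freePoints_iff_insert_mem_sparseSets {y : α} (hX : X ∈ sparseSets 𝓑 t s) :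
    y ∈ freePoints 𝓑 X s ↔ y ∉ X ∧ insert y X ∈ sparseSets 𝓑 (t + 1) s := by
  rw [freePoints, mem_filter, mem_compl]
  refine and_congr_right fun hy ↦ ?_
  obtain ⟨hXt, hXs⟩ := mem_sparseSets.1 hX
  have hinsert {B} (hB : B ∈ 𝓑) : s + 1 ≤ #(insert y X ∩ B) ↔ #(X ∩ B) = s ∧ y ∈ B := by
    simpa [union_singleton] using
      add_card_le_card_union_inter_iff (disjoint_singleton_right.2 hy) (hXs B hB)
  simp only [mem_sparseSets, card_insert_of_notMem hy, hXt, true_and, mem_blocksMeeting]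
  refine ⟨fun h B hB ↦ ?_, fun h B ⟨hB, hXB⟩ hyB ↦ ?_⟩
  · by_contra! hlt
    exact h B ⟨hB, ((hinsert hB).1 hlt).1⟩ ((hinsert hB).1 hlt).2
  · exact (h B hB).not_gt ((hinsert hB).2 ⟨hXB, hyB⟩)

lemma erase_mem_sparseSets {z : α} (hX : X ∈ sparseSets 𝓑 (t + 1) s) (hz : z ∈ X) :
    X.erase z ∈ sparseSets 𝓑 t s := by
  obtain ⟨hXt, hXs⟩ := mem_sparseSets.1 hX
  refine mem_sparseSets.2 ⟨by rw [card_erase_of_mem hz, hXt, Nat.add_sub_cancel], fun B hB ↦ ?_⟩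
  exact (card_le_card (inter_subset_inter_right (erase_subset z X))).trans (hXs B hB)

lemma sum_card_freePoints_mul (f : Finset α → ℕ) :
    ∑ X ∈ sparseSets 𝓑 t s, #(freePoints 𝓑 X s) * f X =
      ∑ Z ∈ sparseSets 𝓑 (t + 1) s, ∑ z ∈ Z, f (Z.erase z) := by
  simp only [← smul_eq_mul, ← sum_const, sum_sigma']
  refine sum_bij' (fun P _ ↦ ⟨insert P.2 P.1, P.2⟩) (fun P _ ↦ ⟨P.1.erase P.2, P.2⟩) ?_ ?_ ?_ ?_ ?_
  · rintro ⟨X, y⟩ h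
    obtain ⟨hX, hy⟩ := mem_sigma.1 h
    exact mem_sigma.2
      ⟨((mem_freePoints_iff_insert_mem_sparseSets hX).1 hy).2, mem_insert_self y X⟩
  · rintro ⟨Z, z⟩ h
    obtain ⟨hZ, hz⟩ := mem_sigma.1 h
    have hZz := erase_mem_sparseSets hZ hz
    refine mem_sigma.2 ⟨hZz, (mem_freePoints_iff_insert_mem_sparseSets hZz).2 ?_⟩
    simpa [insert_erase hz] using hZ
  · rintro ⟨X, y⟩ h
    obtain ⟨hX, hy⟩ := mem_sigma.1 h
    simp [erase_insert ((mem_freePoints_iff_insert_mem_sparseSets hX).1 hy).1]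
  · rintro ⟨Z, z⟩ h
    simp [insert_erase (mem_sigma.1 h).2]
  · rintro ⟨X, y⟩ h
    obtain ⟨hX, hy⟩ := mem_sigma.1 h
    simp [erase_insert ((mem_freePoints_iff_insert_mem_sparseSets hX).1 hy).1]

lemma sum_card_freePoints :
    ∑ X ∈ sparseSets 𝓑 t s, #(freePoints 𝓑 X s) = #(sparseSets 𝓑 (t + 1) s) * (t + 1) := by
  have hsum := sum_card_freePoints_mul (𝓑 := 𝓑) (t := t) (s := s) fun _ ↦ 1
  simp only [mul_one, sum_const, smul_eq_mul] at hsum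
  rw [hsum, sum_const_nat fun Z hZ ↦ (mem_sparseSets.1 hZ).1]

lemma sum_card_freePoints_mul_card_blocksMeeting :
    ∑ X ∈ sparseSets 𝓑 t s, #(freePoints 𝓑 X s) * #(blocksMeeting 𝓑 X s) =
      (∑ Z ∈ sparseSets 𝓑 (t + 1) s, #(blocksMeeting 𝓑 Z s)) * (t + 1 - s) := by
  rw [sum_card_freePoints_mul fun X ↦ #(blocksMeeting 𝓑 X s), sum_mul]
  refine sum_congr rfl fun Z hZ ↦ ?_
  obtain ⟨hZt, hZs⟩ := mem_sparseSets.1 hZ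
  rw [sum_congr rfl fun z hz ↦ by rw [blocksMeeting_erase hZs hz]]
  have hswap := sum_card_bipartiteAbove_eq_sum_card_bipartiteBelow (s := Z)
    (t := blocksMeeting 𝓑 Z s) (fun z B ↦ z ∉ B)
  refine hswap.trans (sum_const_nat fun B hB ↦ ?_)
  rw [bipartiteBelow, filter_notMem_eq_sdiff, card_sdiff, inter_comm, (mem_blocksMeeting.1 hB).2,
    hZt]

lemma sum_card_blocksMeeting (hk : (𝓑 : Set (Finset α)).Sized k)
    (hd : (𝓑 : Set (Finset α)).Pairwise fun B C ↦ #(B ∩ C) ≤ d) (hes : e + d ≤ s) :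
    ∑ X ∈ sparseSets 𝓑 (s + e) s, #(blocksMeeting 𝓑 X s) =
      #𝓑 * (k.choose s * (Fintype.card α - k).choose e) := by
  have hswap := sum_card_bipartiteAbove_eq_sum_card_bipartiteBelow (s := sparseSets 𝓑 (s + e) s)
    (t := 𝓑) (fun X B ↦ #(X ∩ B) = s)
  refine hswap.trans (sum_const_nat fun B hB ↦ ?_)
  rw [← hk hB, ← card_filter_card_eq_card_inter_eq]
  congr 1 with X
  simp only [bipartiteBelow, mem_filter, mem_univ, true_and]
  exact ⟨fun h ↦ ⟨(mem_sparseSets.1 h.1).1, h.2⟩,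
    fun h ↦ ⟨mem_sparseSets_of_card_inter_eq hd (by omega) h.1 hB h.2, h.2⟩⟩

lemma sum_card_blocksMeeting_add_two_mul (hk : (𝓑 : Set (Finset α)).Sized k)
    (hd : (𝓑 : Set (Finset α)).Pairwise fun B C ↦ #(B ∩ C) ≤ d) :
    ∑ X ∈ sparseSets 𝓑 (d + 2 * a) (d + a), #(blocksMeeting 𝓑 X (d + a)) =
      #𝓑 * (k.choose (d + a) * (Fintype.card α - k).choose a) := by
  rw [← sum_card_blocksMeeting hk hd (add_comm a d).le, add_assoc, two_mul]

lemma card_filter_sparseSets_card_inter_eq {C : Finset α}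
    (hk : (𝓑 : Set (Finset α)).Sized (d + c))
    (hd : (𝓑 : Set (Finset α)).Pairwise fun B C ↦ #(B ∩ C) ≤ d) (hB : B ∈ 𝓑) (hC : C ∈ 𝓑)
    (hBC : B ≠ C) :
    #{X ∈ sparseSets 𝓑 (d + 2 * a) (d + a) | #(X ∩ B) = d + a ∧ #(X ∩ C) = d + a} =
      if #(B ∩ C) = d then c.choose a ^ 2 else 0 := by
  split_ifs with hcard
  · rw [← card_filter_card_inter_eq_card_inter_eq (hk hB) (hk hC) hcard]
    congr 1 with X
    simp only [mem_filter, mem_univ, true_and]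
    exact ⟨fun h ↦ ⟨(mem_sparseSets.1 h.1).1, h.2⟩,
      fun h ↦ ⟨mem_sparseSets_of_card_inter_eq hd (by omega) h.1 hB h.2.1, h.2⟩⟩
  · refine card_eq_zero.2 (filter_eq_empty_iff.2 ?_)
    rintro X hX ⟨hXB, hXC⟩
    refine hcard ?_
    have := (mem_sparseSets.1 hX).1
    have := card_inter_add_card_inter_add_card_inter_sdiff_le X B C
    have := hd hB hC hBC
    omega

lemma sum_card_blocksMeeting_sq (hk : (𝓑 : Set (Finset α)).Sized (d + c))
    (hd : (𝓑 : Set (Finset α)).Pairwise fun B C ↦ #(B ∩ C) ≤ d) :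
    ∑ X ∈ sparseSets 𝓑 (d + 2 * a) (d + a), #(blocksMeeting 𝓑 X (d + a)) ^ 2 =
      ∑ X ∈ sparseSets 𝓑 (d + 2 * a) (d + a), #(blocksMeeting 𝓑 X (d + a)) +
        #(extremalPairs 𝓑 d) * c.choose a ^ 2 := by
  have hsq (X : Finset α) : #(blocksMeeting 𝓑 X (d + a)) ^ 2 = #(blocksMeeting 𝓑 X (d + a)) +
      #{P ∈ 𝓑.offDiag | #(X ∩ P.1) = d + a ∧ #(X ∩ P.2) = d + a} := by
    have hoffDiag : {P ∈ 𝓑.offDiag | #(X ∩ P.1) = d + a ∧ #(X ∩ P.2) = d + a} =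
        (blocksMeeting 𝓑 X (d + a)).offDiag := by
      ext P
      simp only [mem_filter, mem_offDiag, mem_blocksMeeting]
      tauto
    rw [hoffDiag, offDiag_card, sq, Nat.add_sub_cancel' (Nat.le_mul_self _)]
  rw [sum_congr rfl fun X _ ↦ hsq X, sum_add_distrib, extremalPairs, card_filter, sum_mul]
  congr 1
  have hswap := sum_card_bipartiteAbove_eq_sum_card_bipartiteBelow
    (s := sparseSets 𝓑 (d + 2 * a) (d + a)) (t := 𝓑.offDiag)
    (fun X P ↦ #(X ∩ P.1) = d + a ∧ #(X ∩ P.2) = d + a)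
  refine hswap.trans (sum_congr rfl fun P hP ↦ ?_)
  obtain ⟨hP₁, hP₂, hne⟩ := mem_offDiag.1 hP
  rw [bipartiteBelow, card_filter_sparseSets_card_inter_eq hk hd hP₁ hP₂ hne, ite_mul, one_mul,
    zero_mul]

lemma card_blocksMeeting_mul_choose (hk : (𝓑 : Set (Finset α)).Sized k)
    (hβ : ∀ X : Finset α, #X = t + e → ∃! B, B ∈ 𝓑 ∧ s + e ≤ #(X ∩ B))
    (hX : X ∈ sparseSets 𝓑 t s) :
    #(blocksMeeting 𝓑 X s) * (k - s).choose e = (Fintype.card α - t).choose e := by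
  obtain ⟨hXt, hXs⟩ := mem_sparseSets.1 hX
  rw [← hXt, ← card_compl, ← card_powersetCard e Xᶜ, ← mul_one #(powersetCard e Xᶜ), eq_comm]
  refine card_mul_eq_card_mul (· ⊆ ·) (fun E hE ↦ card_eq_one.2 ?_) fun B hB ↦ ?_
  · obtain ⟨hEX, rfl⟩ := mem_powersetCard.1 hE
    have hXE : Disjoint X E := subset_compl_iff_disjoint_left.1 hEX
    obtain ⟨B, hB, hunique⟩ := hβ (X ∪ E) (by rw [card_union_of_disjoint hXE, hXt])
    have hmem {C} : C ∈ bipartiteAbove (· ⊆ ·) (blocksMeeting 𝓑 X s) E ↔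
        C ∈ 𝓑 ∧ s + #E ≤ #((X ∪ E) ∩ C) := by
      rw [mem_bipartiteAbove, mem_blocksMeeting, and_assoc]
      exact and_congr_right fun hC ↦ (add_card_le_card_union_inter_iff hXE (hXs C hC)).symm
    exact ⟨B, ext fun C ↦ by rw [hmem, mem_singleton]; exact ⟨hunique C, fun h ↦ h ▸ hB⟩⟩
  · rw [← card_sdiff_of_mem_blocksMeeting hk hB, ← card_powersetCard]
    congr 1 with E
    simp only [mem_bipartiteBelow, mem_powersetCard, sdiff_eq_inter_compl, subset_inter_iff]
    tauto

lemma sum_card_blocksMeeting_mul_choose (hk : (𝓑 : Set (Finset α)).Sized k)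
    (hβ : ∀ X : Finset α, #X = t + e → ∃! B, B ∈ 𝓑 ∧ s + e ≤ #(X ∩ B)) :
    (∑ X ∈ sparseSets 𝓑 t s, #(blocksMeeting 𝓑 X s)) * (k - s).choose e =
      #(sparseSets 𝓑 t s) * (Fintype.card α - t).choose e := by
  rw [sum_mul, sum_const_nat fun X hX ↦ card_blocksMeeting_mul_choose hk hβ hX]

lemma card_sparseSets_succ_mul_add (hk : (𝓑 : Set (Finset α)).Sized k)
    (hd : (𝓑 : Set (Finset α)).Pairwise fun B C ↦ #(B ∩ C) ≤ d) (hts : t + d ≤ 2 * s) :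
    #(sparseSets 𝓑 (t + 1) s) * (t + 1) +
        (∑ X ∈ sparseSets 𝓑 t s, #(blocksMeeting 𝓑 X s)) * (k - s) =
      #(sparseSets 𝓑 t s) * (Fintype.card α - t) := by
  rw [← sum_card_freePoints, sum_mul, ← sum_add_distrib]
  refine sum_const_nat fun X hX ↦ ?_
  rw [← (mem_sparseSets.1 hX).1] at hts ⊢
  exact card_freePoints_add hk hd hts

lemma sum_card_blocksMeeting_succ_mul_add (hk : (𝓑 : Set (Finset α)).Sized k)
    (hd : (𝓑 : Set (Finset α)).Pairwise fun B C ↦ #(B ∩ C) ≤ d) (hts : t + d ≤ 2 * s) :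
    (∑ Z ∈ sparseSets 𝓑 (t + 1) s, #(blocksMeeting 𝓑 Z s)) * (t + 1 - s) +
        (∑ X ∈ sparseSets 𝓑 t s, #(blocksMeeting 𝓑 X s) ^ 2) * (k - s) =
      (∑ X ∈ sparseSets 𝓑 t s, #(blocksMeeting 𝓑 X s)) * (Fintype.card α - t) := by
  rw [← sum_card_freePoints_mul_card_blocksMeeting, sum_mul, ← sum_add_distrib, sum_mul]
  refine sum_congr rfl fun X hX ↦ ?_
  rw [← (mem_sparseSets.1 hX).1] at hts ⊢
  rw [← card_freePoints_add hk hd hts]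
  ring

lemma card_extremalPairs_mul (hk : (𝓑 : Set (Finset α)).Sized (d + c))
    (hd : (𝓑 : Set (Finset α)).Pairwise fun B C ↦ #(B ∩ C) ≤ d) {x : ℕ}
    (hv : Fintype.card α = d + c + x) (hac : a ≤ c) (hax : a ≤ x)
    (hβ : ∀ X : Finset α, #X = d + 2 * a + 1 → ∃! B, B ∈ 𝓑 ∧ d + a + 1 ≤ #(X ∩ B)) :
    #(extremalPairs 𝓑 d) * c.choose a ^ 2 * (c - a) =
      #𝓑 * ((d + c).choose (d + a) * x.choose a) * (x - a) := by
  have hreg {X : Finset α} (hX : X ∈ sparseSets 𝓑 (d + 2 * a) (d + a)) :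
      #(blocksMeeting 𝓑 X (d + a)) * (c - a) = (c - a) + (x - a) := by
    have := card_blocksMeeting_mul_choose hk hβ hX
    rw [Nat.choose_one_right, Nat.choose_one_right, Nat.add_sub_add_left, hv] at this
    omega
  have hQ := sum_card_blocksMeeting_add_two_mul (a := a) hk hd
  rw [hv, Nat.add_sub_cancel_left] at hQ
  have hsq := sum_card_blocksMeeting_sq (a := a) hk hd
  have hsum : (∑ X ∈ sparseSets 𝓑 (d + 2 * a) (d + a), #(blocksMeeting 𝓑 X (d + a)) ^ 2) *
      (c - a) = (∑ X ∈ sparseSets 𝓑 (d + 2 * a) (d + a), #(blocksMeeting 𝓑 X (d + a))) *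
        ((c - a) + (x - a)) := by
    rw [sum_mul, sum_mul]
    exact sum_congr rfl fun X hX ↦ by rw [sq, mul_assoc, hreg hX]
  rw [hsq, hQ, add_mul, mul_add] at hsum
  exact Nat.add_left_cancel hsum

end SparseSets

section Parameters

lemma gPoly_mul_eq_sub_sq {S Q M T R d j c x : ℝ} (hd : 0 ≤ d) (hj : 0 ≤ j) (hc : j + 1 < c)
    (hx : j + 1 < x)
    (hS : T * (d + 2 * j + 1) + Q * (c - j) = S * (c + x - 2 * j))
    (hR : R * (j + 1) + M * (c - j) = Q * (c + x - 2 * j))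
    (hT : R * ((c - j) * (c - j - 1)) = T * ((c + x - 2 * j - 1) * (c + x - 2 * j - 2)))
    (hM : (c - j) * (c - j - 1) * (d + j + 1) * (M - Q) = (j + 1) * (x - j) * (x - j - 1) * Q) :
    gPoly x d c (j + 2) * (Q ^ 2 * (x - j) * ((d + 2 * (j + 1)) * c - (j + 1) * (d + c + x))) =
      (S * M - Q ^ 2) * ((c + x - 2 * j) * (c + x - 2 * j - 1) * (c + x - 2 * j - 2) * (j + 1) *
        (d + j + 1) ^ 2 * (c - j - 1)) := by
  obtain ⟨p, rfl⟩ : ∃ p, c = p + j + 1 := ⟨c - j - 1, by ring⟩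
  obtain ⟨y, rfl⟩ : ∃ y, x = y + j + 1 := ⟨x - j - 1, by ring⟩
  have hp : 0 < p := by linarith
  have hy : 0 < y := by linarith
  have hM' : M = Q + (j + 1) * (y + 1) * y * Q / ((p + 1) * p * (d + j + 1)) := by
    rw [← sub_eq_iff_eq_add', eq_div_iff (by positivity)]
    linear_combination hM
  have hR' : R = (Q * (p + y + 2) - M * (p + 1)) / (j + 1) := by
    rw [eq_div_iff (by positivity)]
    linear_combination hR
  have hT' : T = R * ((p + 1) * p) / ((p + y + 1) * (p + y)) := by
    rw [eq_div_iff (by positivity)]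
    linear_combination -hT
  have hS' : S = (T * (d + 2 * j + 1) + Q * (p + 1)) / (p + y + 2) := by
    rw [eq_div_iff (by positivity)]
    linear_combination -hS
  rw [hS', hT', hR', hM', gPoly]
  field_simp
  ring

variable {𝓑 : Finset (Finset α)} {v k d i c x j : ℕ}

lemma IsDesign.sized (h : IsDesign 𝓑 v k d) : (𝓑 : Set (Finset α)).Sized k := h.2.2.2.2.1

lemma IsDesign.pairwise_card_inter_le (h : IsDesign 𝓑 v k d) :
    (𝓑 : Set (Finset α)).Pairwise fun B C ↦ #(B ∩ C) ≤ d :=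
  h.2.2.2.2.2.1

lemma IsDesign.two_mul_le (h : IsDesign 𝓑 v k d) : 2 * k ≤ v + d := by
  obtain ⟨hv, -, -, -, hk, -, B, hB, C, hC, -, hBC⟩ := h
  rw [two_mul, ← hv, ← hBC]
  nth_rw 1 [← hk B hB]
  rw [← hk C hC, ← card_union_add_card_inter]
  exact Nat.add_le_add_right (card_le_univ _) _

lemma IsBetaDesign.add_le (h : IsBetaDesign 𝓑 v k d i) : d + i ≤ k := by
  obtain ⟨hD, hi, hiv, hβ⟩ := h
  have hdk := hD.2.2.1
  have hkv := hD.2.2.2.1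
  obtain ⟨X, -, hX⟩ := exists_subset_card_eq (s := (univ : Finset α)) (n := d + 2 * i - 1)
    (by rw [card_univ, hD.1]; omega)
  obtain ⟨B, ⟨hB, hXB⟩, -⟩ := hβ X hX
  exact hXB.trans ((card_le_card inter_subset_right).trans_eq (hD.sized hB))

lemma IsBetaDesign.card_extremalPairs_mul_choose_sq
    (h : IsBetaDesign 𝓑 (d + c + x) (d + c) d (j + 2)) :
    (c - j) * (c - (j + 1)) * (d + j + 1) * (#(extremalPairs 𝓑 d) * c.choose j ^ 2) =
      (j + 1) * (x - j) * (x - (j + 1)) *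
        (#𝓑 * ((d + c).choose (d + j) * x.choose j)) := by
  have hjc := h.add_le
  have hcx := h.1.two_mul_le
  have hlevel := card_extremalPairs_mul (a := j + 1) h.1.sized h.1.pairwise_card_inter_le h.1.1
    (by omega) (by omega) h.2.2.2
  have hc := Nat.choose_succ_right_eq c j
  have hx := Nat.choose_succ_right_eq x j
  have hdc := Nat.choose_succ_right_eq (d + c) (d + j)
  rw [Nat.add_sub_add_left] at hdc
  refine Nat.eq_of_mul_eq_mul_left (show 0 < c - j by omega) ?_
  calc
    _ = (d + j + 1) * (c - (j + 1)) * #(extremalPairs 𝓑 d) * (c.choose j * (c - j)) ^ 2 := by ring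
    _ = (d + j + 1) * (j + 1) ^ 2 *
          (#(extremalPairs 𝓑 d) * c.choose (j + 1) ^ 2 * (c - (j + 1))) := by rw [← hc]; ring
    _ = #𝓑 * (x - (j + 1)) * (j + 1) * ((d + c).choose (d + j + 1) * (d + j + 1)) *
          (x.choose (j + 1) * (j + 1)) := by rw [hlevel, add_assoc d]; ring
    _ = _ := by rw [hdc, hx]; ring

lemma IsBetaDesign.mul_sum_card_blocksMeeting_sq_sub
    (h : IsBetaDesign 𝓑 (d + c + x) (d + c) d (j + 2)) :
    ((c : ℝ) - j) * (c - j - 1) * (d + j + 1) *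
        (∑ X ∈ sparseSets 𝓑 (d + 2 * j) (d + j), (#(blocksMeeting 𝓑 X (d + j)) : ℝ) ^ 2 -
          ∑ X ∈ sparseSets 𝓑 (d + 2 * j) (d + j), (#(blocksMeeting 𝓑 X (d + j)) : ℝ)) =
      (j + 1) * (x - j) * (x - j - 1) *
        ∑ X ∈ sparseSets 𝓑 (d + 2 * j) (d + j), (#(blocksMeeting 𝓑 X (d + j)) : ℝ) := by
  have hjc : j + 1 ≤ c := by have := h.add_le; omega
  have hjx : j + 1 ≤ x := by have := h.1.two_mul_le; omega
  have hQ := sum_card_blocksMeeting_add_two_mul (a := j) h.1.sized h.1.pairwise_card_inter_le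
  rw [h.1.1, Nat.add_sub_cancel_left] at hQ
  have hpairs := h.card_extremalPairs_mul_choose_sq
  rw [← hQ] at hpairs
  have hsq := sum_card_blocksMeeting_sq (a := j) h.1.sized h.1.pairwise_card_inter_le
  apply_fun (Nat.cast : ℕ → ℝ) at hpairs hsq
  push_cast [Nat.cast_sub hjc, Nat.cast_sub hjx, Nat.cast_sub (Nat.le_of_succ_le hjc),
    Nat.cast_sub (Nat.le_of_succ_le hjx)] at hpairs hsq
  rw [hsq, add_sub_cancel_left, sub_sub (c : ℝ), sub_sub (x : ℝ), hpairs]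

lemma IsBetaDesign.sum_card_blocksMeeting_pos (h : IsBetaDesign 𝓑 (d + c + x) (d + c) d (j + 2)) :
    0 < ∑ X ∈ sparseSets 𝓑 (d + 2 * j) (d + j), #(blocksMeeting 𝓑 X (d + j)) := by
  have hjc := h.add_le
  have hcx := h.1.two_mul_le
  have hb := h.1.2.1
  rw [sum_card_blocksMeeting_add_two_mul h.1.sized h.1.pairwise_card_inter_le, h.1.1,
    Nat.add_sub_cancel_left]
  exact Nat.mul_pos (by omega)
    (Nat.mul_pos (Nat.choose_pos (by omega)) (Nat.choose_pos (by omega)))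

theorem IsBetaDesign.exists_pos_gPoly_eq_mul (h : IsBetaDesign 𝓑 (d + c + x) (d + c) d (j + 2))
    (hub : (j + 1) * (d + c + x) < (d + 2 * (j + 1)) * c) :
    ∃ r : ℝ, 0 < r ∧ gPoly x d c (j + 2) = r * (#(sparseSets 𝓑 (d + 2 * j) (d + j)) *
        ∑ X ∈ sparseSets 𝓑 (d + 2 * j) (d + j), (#(blocksMeeting 𝓑 X (d + j)) : ℝ) ^ 2 -
      (∑ X ∈ sparseSets 𝓑 (d + 2 * j) (d + j), (#(blocksMeeting 𝓑 X (d + j)) : ℝ)) ^ 2) := by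
  have hk := h.1.sized
  have hd := h.1.pairwise_card_inter_le
  have hv := h.1.1
  have hjc : j + 1 < c := by have := h.add_le; omega
  have hjx : j + 1 < x := by have := h.1.two_mul_le; omega
  have hS := card_sparseSets_succ_mul_add (t := d + 2 * j) (s := d + j) hk hd (by omega)
  have hR := sum_card_blocksMeeting_succ_mul_add (t := d + 2 * j) (s := d + j) hk hd (by omega)
  have hT := sum_card_blocksMeeting_mul_choose (t := d + 2 * j + 1) (s := d + j) (e := 2) hk h.2.2.2
  have hM := h.mul_sum_card_blocksMeeting_sq_sub
  have hQpos := h.sum_card_blocksMeeting_pos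
  rw [hv, Nat.add_sub_add_left] at hS hR hT
  rw [show d + 2 * j + 1 - (d + j) = j + 1 by omega] at hR
  apply_fun (Nat.cast : ℕ → ℝ) at hS hR hT
  push_cast [Nat.cast_choose_two, Nat.cast_sub (show j ≤ c by omega),
    Nat.cast_sub (show d + 2 * j ≤ d + c + x by omega),
    Nat.cast_sub (show d + 2 * j + 1 ≤ d + c + x by omega)] at hS hR hT
  rify at hjc hjx hQpos hub
  have hpoly := gPoly_mul_eq_sub_sq (S := #(sparseSets 𝓑 (d + 2 * j) (d + j)))
    (T := #(sparseSets 𝓑 (d + 2 * j + 1) (d + j)))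
    (R := ∑ Z ∈ sparseSets 𝓑 (d + 2 * j + 1) (d + j), (#(blocksMeeting 𝓑 Z (d + j)) : ℝ))
    (Nat.cast_nonneg d) (Nat.cast_nonneg j) hjc hjx
    (by linear_combination hS) (by linear_combination hR) (by linear_combination 2 * hT) hM
  have hslack := sub_pos.2 hub
  have hj : (0 : ℝ) ≤ j := j.cast_nonneg
  have hc : (0 : ℝ) < c - j - 1 := by linarith
  have hx : (0 : ℝ) < x - j := by linarith
  have hcx : (0 : ℝ) < c + x - 2 * j - 2 := by linarith
  have hcx₁ : (0 : ℝ) < c + x - 2 * j - 1 := by linarith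
  have hcx₀ : (0 : ℝ) < c + x - 2 * j := by linarith
  rw [← eq_div_iff (by positivity), mul_div_assoc, mul_comm] at hpoly
  exact ⟨_, by positivity, hpoly⟩

end Parameters

/-- **Proposition 6.** Let `𝓑` be a `β(i)` design with parameter `(v, k, d)`, `c = k - d`,
`i ≥ 2`, and suppose `v` does not achieve the upper bound `(d + 2(i-1))(k-d)/(i-1)`.
Then `g(v-k, d, c, i) ≥ 0`, with equality if and only if the number of blocks `B` with
`|X ∩ B| = d + i - 2` does not depend on the choice of `X ∈ S₁`. -/
theorem prop6 (𝓑 : Finset (Finset α)) (v k d i c : ℕ)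
    (hB : IsBetaDesign 𝓑 v k d i) (hi : 2 ≤ i) (hc : c = k - d)
    (hub : (i - 1) * v < (d + 2 * (i - 1)) * (k - d)) :
    0 ≤ gPoly ((v : ℝ) - (k : ℝ)) (d : ℝ) (c : ℝ) (i : ℝ) ∧
    (gPoly ((v : ℝ) - (k : ℝ)) (d : ℝ) (c : ℝ) (i : ℝ) = 0 ↔
      ∃ m : ℕ, ∀ X ∈ S1 𝓑 d i,
        (𝓑.filter (fun B => (X ∩ B).card = d + i - 2)).card = m) := by
  obtain ⟨j, rfl⟩ := Nat.exists_eq_add_of_le' hi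
  obtain rfl : k = d + c := by have := hB.1.2.2.1; omega
  obtain ⟨x, rfl⟩ := Nat.exists_eq_add_of_le hB.1.2.2.2.1.le
  rw [Nat.add_sub_cancel_left] at hub
  obtain ⟨r, hr, hg⟩ := hB.exists_pos_gPoly_eq_mul hub
  rw [Nat.cast_add (d + c), add_sub_cancel_left, Nat.cast_add j, Nat.cast_two, hg]
  refine ⟨mul_nonneg hr.le (sub_nonneg.2 sq_sum_le_card_mul_sum_sq), ?_⟩
  rw [mul_eq_zero_iff_left hr.ne', sub_eq_zero, eq_comm, sq_sum_eq_card_mul_sum_sq_iff]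
  simp only [Nat.cast_inj]
  exact Set.pairwise_eq_iff_exists_eq _ _
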